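/- arXiv:2401.12510 — 3 statements merged into one kernel-verified Lean document; each statement's English description precedes it below -/
import Mathlib

section
/- Let R be a centrally essential ring and let J be a right ideal of R which is semiprime as a ring. Then J is a reduced and commutative right ideal, i.e., J contains no nonzero nilpotent elements and a*b = b*a for all a, b ∈ J. -/
/-- A unital ring `R` is centrally essential if for every nonzero `a ∈ R` there exists a
central element `c` such that `a * c` is a nonzero central element. -/
def IsCentrallyEssential (R : Type*) [Ring R] : Prop :=
  ∀ a : R, a ≠ 0 → ∃ c ∈ Set.center R, a * c ∈ Set.center R ∧ a * c ≠ 0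

/-- In a centrally essential ring, a right ideal that is semiprime as a ring has no nonzero
square-zero elements. -/
theorem IsCentrallyEssential.eq_zero_of_mul_self_eq_zero {R : Type*} [Ring R]
    (hR : IsCentrallyEssential R)
    (J : AddSubgroup R) (hJright : ∀ x ∈ J, ∀ r : R, x * r ∈ J)
    (hJsemiprime : ∀ N : AddSubgroup R, (N : Set R) ⊆ (J : Set R) →
      (∀ x ∈ J, ∀ n ∈ N, x * n ∈ N) → (∀ x ∈ J, ∀ n ∈ N, n * x ∈ N) →
      (∀ m ∈ N, ∀ n ∈ N, m * n = 0) → N = ⊥)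
    {a : R} (ha : a ∈ J) (haa : a * a = 0) : a = 0 := by
  by_contra hne
  obtain ⟨c, hc, hac, hac0⟩ := hR a hne
  have hcomm : ∀ r, r * (a * c) = a * c * r := Semigroup.mem_center_iff.1 hac
  have hsq : a * c * (a * c) = 0 := by
    rw [mul_assoc a c, ← mul_assoc c, ← Semigroup.mem_center_iff.1 hc a, mul_assoc a c,
      ← mul_assoc a a, haa, zero_mul]
  -- The principal right ideal generated by the central element `a * c` is a square-zero ideal.
  have hbot := hJsemiprime (AddMonoidHom.mulLeft (a * c)).range ?_ ?_ ?_ ?_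
  · apply hac0
    rw [← AddSubgroup.mem_bot, ← hbot]
    exact ⟨1, mul_one _⟩
  · rintro _ ⟨r, rfl⟩
    exact hJright _ (hJright a ha c) r
  · rintro x - _ ⟨r, rfl⟩
    refine ⟨x * r, ?_⟩
    simp only [AddMonoidHom.coe_mulLeft]
    rw [← mul_assoc, ← hcomm x, mul_assoc]
  · rintro x - _ ⟨r, rfl⟩
    exact ⟨r * x, (mul_assoc _ _ _).symm⟩
  · rintro _ ⟨r, rfl⟩ _ ⟨s, rfl⟩
    simp only [AddMonoidHom.coe_mulLeft]
    rw [mul_assoc, ← mul_assoc r, hcomm r, mul_assoc (a * c) r, ← mul_assoc, hsq, zero_mul]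

/-- Let `R` be a centrally essential ring and let `J` be a right ideal of `R` which is
semiprime as a ring. Then `J` is a reduced and commutative right ideal. -/
theorem stmt3 (R : Type*) [Ring R] (hR : IsCentrallyEssential R)
    (J : AddSubgroup R) (hJright : ∀ x ∈ J, ∀ r : R, x * r ∈ J)
    (hJsemiprime : ∀ N : AddSubgroup R, (N : Set R) ⊆ (J : Set R) →
      (∀ x ∈ J, ∀ n ∈ N, x * n ∈ N) → (∀ x ∈ J, ∀ n ∈ N, n * x ∈ N) →
      (∀ m ∈ N, ∀ n ∈ N, m * n = 0) → N = ⊥) :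
    (∀ a ∈ J, IsNilpotent a → a = 0) ∧ (∀ a ∈ J, ∀ b ∈ J, a * b = b * a) := by
  have hsq : ∀ a ∈ J, a * a = 0 → a = 0 := fun a ha =>
    hR.eq_zero_of_mul_self_eq_zero J hJright hJsemiprime ha
  refine ⟨?_, ?_⟩
  · rintro a ha ⟨n, hn⟩
    have hpow : ∀ n : ℕ, a ^ (n + 1) = 0 → a = 0 := by
      intro n
      induction n with
      | zero => simp
      | succ n ih =>
        intro h
        refine ih (hsq _ (pow_succ' a n ▸ hJright a ha _) ?_)
        rw [← pow_add]
        exact pow_eq_zero_of_le (by omega) h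
    exact hpow n (by rw [pow_succ, hn, zero_mul])
  · intro a ha b hb
    by_contra hne
    obtain ⟨c, hc, hd, hd0⟩ := hR (a * b - b * a) (sub_ne_zero.2 hne)
    have hdJ : (a * b - b * a) * c ∈ J :=
      hJright _ (J.sub_mem (hJright a ha b) (hJright b hb a)) c
    rw [Semigroup.mem_center_iff] at hc
    generalize hdef : (a * b - b * a) * c = d at hd hd0 hdJ
    -- A central multiple `d * z` for which `a * (d * z)` is central annihilates `a * b - b * a`.
    have key : ∀ z ∈ Set.center R, a * d * z ∈ Set.center R → d * z = 0 := by
      intro z hz haz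
      have hzc := Semigroup.mem_center_iff.1 hz
      have hdz := Semigroup.mem_center_iff.1 (Set.mul_mem_center hd hz)
      have hcom : (a * b - b * a) * (d * z) = 0 := by
        have h := Semigroup.mem_center_iff.1 haz b
        rw [sub_mul, sub_eq_zero, mul_assoc a b, hdz b, mul_assoc b a, ← mul_assoc a d z, h,
          mul_assoc a d z, mul_assoc a (d * z) b]
      have hdd : d * (d * z) = 0 := by
        rw [← hdef, mul_assoc _ c, ← hc, hdef, ← mul_assoc, hcom, zero_mul]
      refine hsq _ (hJright d hdJ z) ?_
      rw [mul_assoc d z, ← hzc, ← mul_assoc, hdd, zero_mul]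
    have had : a * d ≠ 0 := by
      intro h
      apply hd0
      simpa using key 1 Set.one_mem_center (by simp [h, Set.zero_mem_center])
    obtain ⟨z, hz, haz, haz0⟩ := hR (a * d) had
    exact haz0 (by rw [mul_assoc, key z hz haz, mul_zero])
end

section
/- Let R be a unital ring in which every idempotent is central, and let I be a minimal non-nilpotent right ideal of R. Then I = eR for a central idempotent e (so I is a two-sided ideal), and R is a centrally essential ring if and only if both the ring I (with operations inherited from R) and the quotient ring R/I are centrally essential rings. -/
/-- A subset `S` of a ring, regarded as a (not necessarily unital) ring with the inherited
operations, is centrally essential if it is commutative or for every element of `S` that is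
not central in `S` there exist nonzero elements `x, y` of the center of `S` with `a * x = y`. -/
def SetIsCentrallyEssential (R : Type*) [Ring R] (S : Set R) : Prop :=
  (∀ x ∈ S, ∀ y ∈ S, x * y = y * x) ∨
    ∀ a ∈ S, (¬ ∀ x ∈ S, a * x = x * a) →
      ∃ x ∈ S, ∃ y ∈ S, (∀ z ∈ S, x * z = z * x) ∧ (∀ z ∈ S, y * z = z * y) ∧
        x ≠ 0 ∧ y ≠ 0 ∧ a * x = y

/-- Brauer's lemma: a minimal right ideal `I` with `I * I ≠ 0` contains an idempotent `e ≠ 0`. -/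
theorem exists_idempotent_of_minimal_right_ideal {R : Type*} [Ring R] (I : AddSubgroup R)
    (hIright : ∀ x ∈ I, ∀ r : R, x * r ∈ I)
    (hImin : ∀ I' : AddSubgroup R, (∀ x ∈ I', ∀ r : R, x * r ∈ I') → I' ≤ I →
      I' = ⊥ ∨ I' = I)
    {x y : R} (hx : x ∈ I) (hy : y ∈ I) (hxy : x * y ≠ 0) :
    ∃ e ∈ I, e * e = e ∧ e ≠ 0 := by
  have hxI : I.map (AddMonoidHom.mulLeft x) = I := by
    refine (hImin _ ?_ ?_).resolve_left fun h => hxy ?_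
    · rintro _ ⟨z, hz, rfl⟩ r
      exact ⟨z * r, hIright z hz r, (mul_assoc x z r).symm⟩
    · rintro _ ⟨z, -, rfl⟩
      exact hIright x hx z
    · have hmem : x * y ∈ I.map (AddMonoidHom.mulLeft x) := ⟨y, hy, rfl⟩
      rwa [h, AddSubgroup.mem_bot] at hmem
  have hann : I ⊓ (AddMonoidHom.mulLeft x).ker = ⊥ := by
    refine (hImin _ ?_ inf_le_left).resolve_right fun h => hxy ?_
    · rintro z ⟨hz, hxz⟩ r
      have hxz : x * z = 0 := hxz
      exact ⟨hIright z hz r, show x * (z * r) = 0 by rw [← mul_assoc, hxz, zero_mul]⟩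
    · rw [← h] at hy
      exact hy.2
  obtain ⟨e, he, hxe⟩ : x ∈ I.map (AddMonoidHom.mulLeft x) := by rwa [hxI]
  have hxe : x * e = x := hxe
  refine ⟨e, he, ?_, ?_⟩
  · have hmem : e * e - e ∈ I ⊓ (AddMonoidHom.mulLeft x).ker :=
      ⟨I.sub_mem (hIright e he e) he,
        show x * (e * e - e) = 0 by rw [mul_sub, ← mul_assoc, hxe, hxe, sub_self]⟩
    rw [hann, AddSubgroup.mem_bot] at hmem
    exact sub_eq_zero.mp hmem
  · rintro rfl
    rw [mul_zero] at hxe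
    exact hxy (by rw [← hxe, zero_mul])

/-- A direct factor `I = eR` of a ring, cut out by a central idempotent `e`, and the quotient
`R/I` are both centrally essential if and only if `R` is. -/
theorem isCentrallyEssential_iff_of_central_idempotent {R : Type*} [Ring R] (I : AddSubgroup R)
    {e : R} (hec : ∀ r : R, e * r = r * e) (hee : e * e = e)
    (hI : ∀ z : R, z ∈ I ↔ e * z = z) :
    IsCentrallyEssential R ↔
      (SetIsCentrallyEssential R (I : Set R) ∧
        ∀ a : R, a ∉ I → ∃ c : R, (∀ x : R, c * x - x * c ∈ I) ∧
          (∀ x : R, a * c * x - x * (a * c) ∈ I) ∧ a * c ∉ I) := by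
  have heI : ∀ r, e * r ∈ I := fun r => (hI _).2 (by rw [← mul_assoc, hee])
  have hfc : ∀ r : R, (1 - e) * r = r * (1 - e) := fun r => by
    rw [sub_mul, mul_sub, one_mul, mul_one, hec]
  have hef : e * (1 - e) = 0 := by rw [mul_sub, hee, mul_one, sub_self]
  constructor
  · intro hR
    refine ⟨Or.inr fun a ha hnc => ?_, fun a ha => ?_⟩
    · have ha0 : a ≠ 0 := by
        rintro rfl
        exact hnc fun x _ => by rw [zero_mul, mul_zero]
      obtain ⟨c, hc, hac, hac0⟩ := hR a ha0
      have hae : a * (e * c) = a * c := by rw [← mul_assoc, ← hec, (hI a).1 ha]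
      rw [Semigroup.mem_center_iff] at hc hac
      refine ⟨e * c, heI c, a * c, ?_, fun z _ => ?_, fun z _ => (hac z).symm, ?_, hac0, hae⟩
      · rw [← hae, ← mul_assoc, ← hec, mul_assoc]
        exact heI _
      · rw [mul_assoc, ← hc, ← mul_assoc, hec z, mul_assoc]
      · intro h
        rw [h, mul_zero] at hae
        exact hac0 hae.symm
    · have ha0 : a * (1 - e) ≠ 0 := by
        intro h
        rw [mul_sub, mul_one, sub_eq_zero, ← hec] at h
        exact ha ((hI a).2 h.symm)
      obtain ⟨c, hc, hac, hac0⟩ := hR _ ha0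
      rw [Semigroup.mem_center_iff] at hc hac
      refine ⟨(1 - e) * c, fun x => ?_, fun x => ?_, fun h => ?_⟩
      · have : (1 - e) * c * x - x * ((1 - e) * c) = 0 := by
          rw [mul_assoc, ← hc x, ← mul_assoc, hfc x, mul_assoc, sub_self]
        rw [this]
        exact I.zero_mem
      · rw [← mul_assoc a, hac x, sub_self]
        exact I.zero_mem
      · rw [hI, ← mul_assoc, hec a, mul_assoc, ← mul_assoc e, hef, zero_mul, mul_zero] at h
        exact hac0 (by rw [mul_assoc, ← h])
  · rintro ⟨hS, hQ⟩ a ha0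
    by_cases ha : a ∈ I
    · have hcen : ∀ y ∈ I, (∀ z ∈ I, y * z = z * y) → y ∈ Set.center R := by
        intro y hy hyz
        rw [Semigroup.mem_center_iff]
        intro r
        calc r * y = e * r * y := by rw [hec, mul_assoc, (hI y).1 hy]
          _ = y * (e * r) := (hyz _ (heI r)).symm
          _ = y * r := by rw [← mul_assoc, ← hec, (hI y).1 hy]
      by_cases hac : ∀ z ∈ I, a * z = z * a
      · have hae : a * e = a := by rw [← hec, (hI a).1 ha]
        refine ⟨e, Semigroup.mem_center_iff.2 fun r => (hec r).symm, ?_, ?_⟩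
        · rw [hae]
          exact hcen a ha hac
        · rwa [hae]
      · rcases hS with hS | hS
        · exact absurd (fun z hz => hS a ha z hz) hac
        · obtain ⟨x, hx, y, hy, hxc, hyc, -, hy0, rfl⟩ := hS a ha hac
          exact ⟨x, hcen x hx hxc, hcen _ hy hyc, hy0⟩
    · obtain ⟨c, hc, hac, hacI⟩ := hQ a ha
      have hkill : ∀ z ∈ I, (1 - e) * z = 0 := fun z hz => by
        rw [sub_mul, one_mul, (hI z).1 hz, sub_self]
      have hcen : ∀ d : R, (∀ x, d * x - x * d ∈ I) → (1 - e) * d ∈ Set.center R := by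
        intro d hd
        rw [Semigroup.mem_center_iff]
        intro r
        have h := hkill _ (hd r)
        rw [mul_sub, sub_eq_zero] at h
        rw [← mul_assoc, ← hfc r, mul_assoc, ← h, mul_assoc]
      have hmul : a * ((1 - e) * c) = (1 - e) * (a * c) := by
        rw [← mul_assoc, ← hfc, mul_assoc]
      refine ⟨(1 - e) * c, hcen c hc, ?_, fun h => hacI ?_⟩
      · rw [hmul]
        exact hcen _ hac
      · rw [hmul, sub_mul, one_mul, sub_eq_zero] at h
        exact (hI _).2 h.symm

/-- Let `R` be a unital ring in which every idempotent is central, and let `I` be a minimal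
non-nilpotent right ideal of `R`. Then `I = eR` for a central idempotent `e` (so `I` is a
two-sided ideal), and `R` is centrally essential iff both the ring `I` and the quotient ring
`R/I` (expressed via representatives) are centrally essential rings. -/
theorem stmt6 (R : Type*) [Ring R] (hidem : ∀ e : R, e * e = e → e ∈ Set.center R)
    (I : AddSubgroup R) (hIright : ∀ x ∈ I, ∀ r : R, x * r ∈ I)
    (hIne : I ≠ ⊥)
    (hImin : ∀ I' : AddSubgroup R, (∀ x ∈ I', ∀ r : R, x * r ∈ I') → I' ≤ I →
      I' = ⊥ ∨ I' = I)
    (hInonnilpotent : ∀ n : ℕ, 0 < n →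
      ∃ f : Fin n → R, (∀ i, f i ∈ I) ∧ (List.ofFn f).prod ≠ 0) :
    (∃ e : R, e ∈ Set.center R ∧ e * e = e ∧ (I : Set R) = Set.range (fun r : R => e * r)) ∧
    (∀ x ∈ I, ∀ r : R, r * x ∈ I) ∧
    (IsCentrallyEssential R ↔
      (SetIsCentrallyEssential R (I : Set R) ∧
        ∀ a : R, a ∉ I → ∃ c : R, (∀ x : R, c * x - x * c ∈ I) ∧
          (∀ x : R, a * c * x - x * (a * c) ∈ I) ∧ a * c ∉ I)) := by
  obtain ⟨f, hfI, hf⟩ := hInonnilpotent 2 two_pos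
  have hf : f 0 * f 1 ≠ 0 := by simpa using hf
  obtain ⟨e, heI, hee, he0⟩ :=
    exists_idempotent_of_minimal_right_ideal I hIright hImin (hfI 0) (hfI 1) hf
  have hcen := hidem e hee
  have hec : ∀ r : R, e * r = r * e := fun r => (Semigroup.mem_center_iff.1 hcen r).symm
  have heR : (AddMonoidHom.mulLeft e).range = I := by
    refine (hImin _ ?_ ?_).resolve_left fun h => he0 ?_
    · rintro _ ⟨z, rfl⟩ r
      exact ⟨z * r, (mul_assoc e z r).symm⟩
    · rintro _ ⟨z, rfl⟩
      exact hIright e heI z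
    · have hmem : e ∈ (AddMonoidHom.mulLeft e).range := ⟨e, hee⟩
      rwa [h, AddSubgroup.mem_bot] at hmem
  have hI : ∀ z : R, z ∈ I ↔ e * z = z := by
    refine fun z => ⟨fun hz => ?_, fun hz => hz ▸ hIright e heI z⟩
    rw [← heR] at hz
    obtain ⟨r, rfl⟩ := hz
    change e * (e * r) = e * r
    rw [← mul_assoc, hee]
  refine ⟨⟨e, hcen, hee, by rw [← heR]; rfl⟩, fun x hx r => ?_,
    isCentrallyEssential_iff_of_central_idempotent I hec hee hI⟩
  rw [hI, ← mul_assoc, hec, mul_assoc, (hI x).1 hx]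
end

section
/- Let R be a commutative integral domain of characteristic 0 and let G be any group. Then the group ring RG is centrally essential if and only if RG is commutative. -/
/-- A centrally essential ring whose center has no nonzero square-zero elements is commutative. -/
theorem IsCentrallyEssential.mul_comm_of_center_reduced {S : Type*} [Ring S]
    (hS : IsCentrallyEssential S)
    (hred : ∀ z ∈ Set.center S, z * z = 0 → z = 0) (a b : S) : a * b = b * a := by
  by_contra hab
  obtain ⟨x, hx, hz, hz0⟩ := hS (a * b - b * a) (sub_ne_zero.mpr hab)
  set z := (a * b - b * a) * x with hzdef
  have comm : ∀ {c : S}, c ∈ Set.center S → ∀ y, c * y = y * c := fun hc y ↦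
    (Set.mem_center_iff.mp hc).comm y
  -- `z` annihilates every central element multiplying `a` into the center
  have hann : ∀ c ∈ Set.center S, a * c ∈ Set.center S → z * c = 0 := by
    intro c hc hac
    have hd : (a * b - b * a) * c = 0 := by
      rw [sub_mul, mul_assoc a b c, ← comm hc b, ← mul_assoc, comm hac b, mul_assoc, sub_self]
    rw [hzdef, mul_assoc, ← comm hc x, ← mul_assoc, hd, zero_mul]
  by_cases hza : a * z = 0
  · exact hz0 (hred z hz (hann z hz (hza ▸ Set.zero_mem_center)))
  · obtain ⟨c, hc, hzc, hzc0⟩ := hS (a * z) hza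
    rw [mul_assoc] at hzc hzc0
    have hzz : z * (z * c) = 0 := hann _ (Set.mul_mem_center hz hc) hzc
    refine hzc0 (hred _ hzc ?_)
    rw [mul_assoc a, comm (Set.mul_mem_center hz hc) (a * (z * c)), mul_assoc a (z * c) (z * c),
      mul_assoc z c (z * c), comm hc (z * c), ← mul_assoc z (z * c) c, hzz, zero_mul, mul_zero,
      mul_zero]

namespace MonoidAlgebra

/-- The conjugate-linear map of the complex group algebra inverting group elements. -/
noncomputable def conjInv (G : Type*) [Group G] : MonoidAlgebra ℂ G →+ MonoidAlgebra ℂ G where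
  toFun x := mapDomain (fun g ↦ g⁻¹) (map (starRingEnd ℂ : ℂ →+ ℂ) x)
  map_zero' := by rw [MonoidAlgebra.map_zero, mapDomain_zero]
  map_add' x y := by rw [MonoidAlgebra.map_add, mapDomain_add]

section conjInv

variable {G : Type*} [Group G]

theorem conjInv_single (g : G) (r : ℂ) :
    conjInv G (single g r) = single g⁻¹ (starRingEnd ℂ r) := by
  simp [conjInv]

theorem conjInv_mul (x y : MonoidAlgebra ℂ G) :
    conjInv G (x * y) = conjInv G y * conjInv G x := by
  induction x using induction_linear with
  | zero => simp
  | add x₁ x₂ h₁ h₂ => rw [add_mul, map_add, h₁, h₂, map_add, mul_add]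
  | single g r =>
    induction y using induction_linear with
    | zero => simp
    | add y₁ y₂ h₁ h₂ => rw [mul_add, map_add, h₁, h₂, map_add, add_mul]
    | single h s => simp [conjInv_single, mul_comm]

theorem conjInv_conjInv (x : MonoidAlgebra ℂ G) : conjInv G (conjInv G x) = x := by
  induction x using induction_linear with
  | zero => simp
  | add x₁ x₂ h₁ h₂ => rw [map_add, map_add, h₁, h₂]
  | single g r => simp [conjInv_single]

theorem coeff_conjInv_inv (x : MonoidAlgebra ℂ G) (g : G) :
    (conjInv G x).coeff g⁻¹ = starRingEnd ℂ (x.coeff g) := by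
  simp [conjInv, mapDomain, Finsupp.mapDomain_apply inv_injective]

theorem coeff_mul_conjInv_one (x : MonoidAlgebra ℂ G) :
    (x * conjInv G x).coeff 1 = ((∑ g ∈ x.coeff.support, Complex.normSq (x.coeff g) : ℝ) : ℂ) := by
  rw [coeff_mul_apply_left, Finsupp.sum]
  simp [coeff_conjInv_inv, Complex.mul_conj]

theorem eq_zero_of_mul_conjInv_eq_zero {x : MonoidAlgebra ℂ G} (h : x * conjInv G x = 0) :
    x = 0 := by
  have hsum : ∑ g ∈ x.coeff.support, Complex.normSq (x.coeff g) = 0 := by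
    have := coeff_mul_conjInv_one x
    rw [h, coeff_zero, Finsupp.zero_apply] at this
    exact_mod_cast this.symm
  rw [Finset.sum_eq_zero_iff_of_nonneg fun _ _ ↦ Complex.normSq_nonneg _] at hsum
  ext g
  by_contra hg
  exact hg (Complex.normSq_eq_zero.mp (hsum g (Finsupp.mem_support_iff.mpr hg)))

theorem complex_eq_zero_of_mul_self_eq_zero {z : MonoidAlgebra ℂ G} (hz : ∀ y, Commute z y)
    (h : z * z = 0) : z = 0 := by
  apply eq_zero_of_mul_conjInv_eq_zero
  apply eq_zero_of_mul_conjInv_eq_zero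
  rw [conjInv_mul, conjInv_conjInv, mul_assoc, ← mul_assoc (conjInv G z),
    ← (hz (conjInv G z)).eq, mul_assoc, ← mul_assoc, h, zero_mul]

end conjInv

theorem commute_of_commute_single_one {R G : Type*} [CommRing R] [Group G]
    {z : MonoidAlgebra R G} (hz : ∀ g, Commute z (single g 1)) (y : MonoidAlgebra R G) :
    Commute z y := by
  induction y using induction_linear with
  | zero => exact Commute.zero_right z
  | add y₁ y₂ h₁ h₂ => exact h₁.add_right h₂
  | single g r => simpa using (hz g).smul_right r

theorem commute_mapRingHom {R S G : Type*} [CommRing R] [CommRing S] [Group G] (f : R →+* S)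
    {z : MonoidAlgebra R G} (hz : ∀ g, Commute z (single g 1)) (g : G) :
    Commute (mapRingHom G f z) (single g 1) := by
  simpa using (hz g).map (mapRingHom G f)

end MonoidAlgebra

theorem nonempty_algHom_complex_of_finiteType (A : Type*) [CommRing A] [Nontrivial A]
    [Algebra ℚ A] [Algebra.FiniteType ℚ A] : Nonempty (A →ₐ[ℚ] ℂ) := by
  obtain ⟨m, hm⟩ := Ideal.exists_maximal A
  have : Module.Finite ℚ (A ⧸ m) :=
    @finite_of_finite_type_of_isJacobsonRing ℚ (A ⧸ m) _ (Ideal.Quotient.field m)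
      (Ideal.Quotient.algebra ℚ) _ _
  exact ⟨(IsAlgClosed.lift : (A ⧸ m) →ₐ[ℚ] ℂ).comp (Ideal.Quotient.mkₐ ℚ m)⟩

/-- Finitely many elements of a field of characteristic zero lie in a subalgebra with a complex
point at which a prescribed nonzero element does not vanish. -/
theorem exists_subalgebra_algHom_complex_ne_zero {K : Type*} [Field K] [Algebra ℚ K]
    (s : Finset K) {a : K} (ha : a ≠ 0) :
    ∃ (A : Subalgebra ℚ K) (φ : A →ₐ[ℚ] ℂ), (s : Set K) ⊆ A ∧ ∀ x : A, (x : K) = a → φ x ≠ 0 := by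
  classical
  let A : Subalgebra ℚ K := Algebra.adjoin ℚ (insert a⁻¹ s : Finset K)
  have hsub : ((insert a⁻¹ s : Finset K) : Set K) ⊆ A := Algebra.subset_adjoin
  have : Algebra.FiniteType ℚ A :=
    (Subalgebra.fg_iff_finiteType A).mp (Subalgebra.fg_adjoin_finset _)
  obtain ⟨φ⟩ := nonempty_algHom_complex_of_finiteType A
  refine ⟨A, φ, fun x hx ↦ hsub (by simp [Finset.mem_coe.mp hx]), fun x hx ↦ ?_⟩
  have hunit : IsUnit x := IsUnit.of_mul_eq_one ⟨a⁻¹, hsub (by simp)⟩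
    (Subtype.ext (by simp [hx, ha]))
  exact (hunit.map _).ne_zero

/-- The center of a group ring over a domain of characteristic zero is reduced. -/
theorem MonoidAlgebra.eq_zero_of_mem_center_of_mul_self_eq_zero {R G : Type*} [CommRing R]
    [IsDomain R] [CharZero R] [Group G] {z : MonoidAlgebra R G}
    (hz : z ∈ Set.center (MonoidAlgebra R G)) (h : z * z = 0) : z = 0 := by
  classical
  let K := FractionRing R
  have : CharZero K := IsFractionRing.charZero R
  ext g
  by_contra hg
  let w : MonoidAlgebra K G := mapRingHom G (algebraMap R K) z
  have hwg : w.coeff g ≠ 0 := by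
    simpa [w] using hg
  obtain ⟨A, φ, hA, hφ⟩ := exists_subalgebra_algHom_complex_ne_zero
    (w.coeff.support.image w.coeff) hwg
  obtain ⟨v, hv⟩ : w ∈ Set.range (map (M := G) (A.val.toRingHom : A →+ K)) := by
    rw [range_map]
    intro i
    by_cases hi : w.coeff i = 0
    · exact ⟨0, by simp [hi]⟩
    · exact ⟨⟨w.coeff i, hA (Finset.mem_coe.mpr (Finset.mem_image_of_mem _
        (Finsupp.mem_support_iff.mpr hi)))⟩, rfl⟩
  replace hv : mapRingHom G A.val.toRingHom v = w := hv
  have hvinj : Function.Injective (mapRingHom G A.val.toRingHom) :=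
    map_injective _ Subtype.val_injective
  have hvcomm : ∀ k, Commute v (single k 1) := by
    refine fun k ↦ hvinj ?_
    have := commute_mapRingHom (algebraMap R K)
      (fun k ↦ (Set.mem_center_iff.mp hz).comm (single k 1)) k
    rw [map_mul, map_mul, hv, mapRingHom_single, map_one]
    exact this
  have hvsq : v * v = 0 := hvinj (by rw [map_mul, hv, map_zero, ← map_mul, h, map_zero])
  have hzero : mapRingHom G φ.toRingHom v = 0 :=
    complex_eq_zero_of_mul_self_eq_zero
      (commute_of_commute_single_one (commute_mapRingHom _ hvcomm))
      (by rw [← map_mul, hvsq, map_zero])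
  refine hφ (v.coeff g) (by rw [← hv]; simp) ?_
  simpa using congrArg (fun x ↦ x.coeff g) hzero

/-- Let `R` be a commutative integral domain of characteristic `0` and let `G` be any group.
Then the group ring `RG` is centrally essential if and only if `RG` is commutative. -/
theorem stmt11 (R : Type*) [CommRing R] [IsDomain R] [CharZero R]
    (G : Type*) [Group G] :
    IsCentrallyEssential (MonoidAlgebra R G) ↔
      ∀ x y : MonoidAlgebra R G, x * y = y * x := by
  refine ⟨fun h ↦ h.mul_comm_of_center_reduced fun _ hz ↦
    MonoidAlgebra.eq_zero_of_mem_center_of_mul_self_eq_zero hz, fun h a ha ↦ ?_⟩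
  refine ⟨1, Set.one_mem_center, ?_, by rwa [mul_one]⟩
  rw [mul_one, Semigroup.mem_center_iff]
  exact fun y ↦ h y a
end
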